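/- Let E be a real Hilbert space, f : E → ℝ differentiable with L-Lipschitz gradient ∇f (L ≥ 0), θ ∈ E, η ≥ 0, and (Ω, μ) a probability space. Let g : Ω → E be Bochner-integrable with ∫ g dμ = ∇f(θ), with ω ↦ ‖g ω‖² integrable and ∫ ‖g ω − ∇f(θ)‖² dμ ≤ σ² for some σ ≥ 0, and assume ω ↦ f(θ − η·g ω) is integrable. Then ∫ f(θ − η·g ω) dμ(ω) ≤ f(θ) − (η − L·η²/2)·‖∇f(θ)‖² + (L·η²/2)·σ². -/

import Mathlib

open MeasureTheory

/-- The descent lemma for a function with Lipschitz gradient. -/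
theorem descent_aux {E : Type*} [NormedAddCommGroup E] [InnerProductSpace ℝ E] [CompleteSpace E]
    (f : E → ℝ) (f' : E → E) (L : ℝ)
    (hdiff : ∀ x : E, HasGradientAt f (f' x) x)
    (hlip : ∀ x y : E, ‖f' x - f' y‖ ≤ L * ‖x - y‖) (x v : E) :
    f (x + v) ≤ f x + inner ℝ (f' x) v + L / 2 * ‖v‖ ^ 2 := by
  have hd : ∀ t : ℝ, HasDerivAt (fun t : ℝ => f (x + t • v)) (inner ℝ (f' (x + t • v)) v) t := by
    intro t
    have h1 : HasDerivAt (fun t : ℝ => x + t • v) v t := by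
      simpa using ((hasDerivAt_id t).smul_const v).const_add x
    have h2 := (hdiff (x + t • v)).hasFDerivAt.comp_hasDerivAt t h1
    simpa [Function.comp_def] using h2
  have hB : ∀ t : ℝ, HasDerivAt
      (fun t : ℝ => f x + t * inner ℝ (f' x) v + L / 2 * ‖v‖ ^ 2 * t ^ 2)
      (inner ℝ (f' x) v + L * ‖v‖ ^ 2 * t) t := by
    intro t
    have h := (((hasDerivAt_id t).mul_const (inner ℝ (f' x) v)).const_add (f x)).add
      ((hasDerivAt_pow 2 t).const_mul (L / 2 * ‖v‖ ^ 2))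
    refine h.congr_deriv ?_
    simp
    ring
  have key := image_le_of_deriv_right_le_deriv_boundary (a := 0) (b := 1)
    (f := fun t : ℝ => f (x + t • v))
    (fun t _ => (hd t).continuousAt.continuousWithinAt)
    (fun t _ => (hd t).hasDerivWithinAt)
    (B := fun t : ℝ => f x + t * inner ℝ (f' x) v + L / 2 * ‖v‖ ^ 2 * t ^ 2)
    (by simp)
    (fun t _ => (hB t).continuousAt.continuousWithinAt)
    (fun t _ => (hB t).hasDerivWithinAt)
    (by
      intro t ht
      have h1 : inner ℝ (f' (x + t • v) - f' x) v ≤ ‖f' (x + t • v) - f' x‖ * ‖v‖ :=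
        real_inner_le_norm _ _
      have h2 := hlip (x + t • v) x
      rw [add_sub_cancel_left, norm_smul, Real.norm_of_nonneg ht.1] at h2
      have h3 := mul_le_mul_of_nonneg_right h2 (norm_nonneg v)
      rw [inner_sub_left] at h1
      nlinarith)
  have := key (x := 1) (by simp)
  simpa using this

/-- One-step case of the paper's Lemma 1: one SGD step with an unbiased stochastic
gradient of bounded variance decreases the expected loss up to the stated error terms. -/
theorem sgd_one_step_expected_descent
    {E : Type*} [NormedAddCommGroup E] [InnerProductSpace ℝ E] [CompleteSpace E]
    {Ω : Type*} [MeasurableSpace Ω] (μ : Measure Ω) [IsProbabilityMeasure μ]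
    (f : E → ℝ) (f' : E → E) (L : ℝ) (hL : 0 ≤ L)
    (hdiff : ∀ x : E, HasGradientAt f (f' x) x)
    (hlip : ∀ x y : E, ‖f' x - f' y‖ ≤ L * ‖x - y‖)
    (θ : E) (η : ℝ) (hη : 0 ≤ η)
    (g : Ω → E) (hg : Integrable g μ)
    (hmean : ∫ ω, g ω ∂μ = f' θ)
    (hg2 : Integrable (fun ω => ‖g ω‖ ^ 2) μ)
    (σ : ℝ) (hσ : 0 ≤ σ)
    (hvar : ∫ ω, ‖g ω - f' θ‖ ^ 2 ∂μ ≤ σ ^ 2)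
    (hfint : Integrable (fun ω => f (θ - η • g ω)) μ) :
    ∫ ω, f (θ - η • g ω) ∂μ ≤
      f θ - (η - L * η ^ 2 / 2) * ‖f' θ‖ ^ 2 + (L * η ^ 2 / 2) * σ ^ 2 := by
  have hi : Integrable (fun ω => inner ℝ (f' θ) (g ω)) μ := hg.const_inner (f' θ)
  have hmi : ∫ ω, inner ℝ (f' θ) (g ω) ∂μ = ‖f' θ‖ ^ 2 := by
    rw [integral_inner hg, hmean, real_inner_self_eq_norm_sq]
  have hexp : ∀ ω, ‖g ω - f' θ‖ ^ 2 = ‖g ω‖ ^ 2 - 2 * inner ℝ (f' θ) (g ω) + ‖f' θ‖ ^ 2 := by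
    intro ω
    rw [norm_sub_sq_real, real_inner_comm]
  have hsq : ∫ ω, ‖g ω‖ ^ 2 ∂μ ≤ σ ^ 2 + ‖f' θ‖ ^ 2 := by
    simp_rw [hexp] at hvar
    have hI0 : Integrable (fun ω => ‖g ω‖ ^ 2 - 2 * inner ℝ (f' θ) (g ω)) μ :=
      hg2.sub (hi.const_mul 2)
    rw [integral_add hI0 (integrable_const _),
      integral_sub hg2 (hi.const_mul 2), integral_const_mul, hmi] at hvar
    simp at hvar
    linarith
  have hpt : ∀ ω, f (θ - η • g ω) ≤
      f θ - η * inner ℝ (f' θ) (g ω) + L * η ^ 2 / 2 * ‖g ω‖ ^ 2 := by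
    intro ω
    have h := descent_aux f f' L hdiff hlip θ (-(η • g ω))
    rw [← sub_eq_add_neg, inner_neg_right, real_inner_smul_right, norm_neg, norm_smul,
      mul_pow, Real.norm_eq_abs, sq_abs] at h
    linarith
  have hI1 : Integrable (fun ω => f θ - η * inner ℝ (f' θ) (g ω)) μ :=
    (integrable_const _).sub (hi.const_mul η)
  have hI2 : Integrable (fun ω => L * η ^ 2 / 2 * ‖g ω‖ ^ 2) μ := hg2.const_mul _
  have hint := integral_mono hfint (hI1.add hI2) hpt
  have heq : ∫ ω, (f θ - η * inner ℝ (f' θ) (g ω) + L * η ^ 2 / 2 * ‖g ω‖ ^ 2) ∂μ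
      = f θ - η * ‖f' θ‖ ^ 2 + L * η ^ 2 / 2 * ∫ ω, ‖g ω‖ ^ 2 ∂μ := by
    rw [integral_add hI1 hI2, integral_sub (integrable_const _) (hi.const_mul η),
      integral_const_mul, integral_const_mul, hmi]
    simp
  have hc : 0 ≤ L * η ^ 2 / 2 := by positivity
  have hfin := mul_le_mul_of_nonneg_left hsq hc
  refine (hint.trans_eq heq).trans ?_
  linarith
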